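/- arXiv:2109.13786 — 7 statements merged into one kernel-verified Lean document; each statement's English description precedes it below -/
import Mathlib

section
/- Let Θ be a nonempty type, α > 0 a real number, T ≥ 1 a natural number, and for each t ∈ {1,…,T} let l_t : Θ → ℝ be a loss function that is α-mixable with a common surrogate (aggregation) map F: for every t, every finite index set, every family of points θ_i ∈ Θ and every family of nonnegative weights P_i summing to 1, one has exp(−α·l_t(F(θ,P))) ≥ Σ_i P_i·exp(−α·l_t(θ_i)). For each t let 𝒩_t be a finite nonempty set of experts with predictions θ_{i,t} ∈ Θ for i ∈ 𝒩_t; let transition weights τ_t(i,j) ≥ 0 satisfy Σ_{j∈𝒩_t} τ_t(i,j) ≤ 1 for every i; let initial unnormalized weights satisfy P̃_{i,1} > 0 for i ∈ 𝒩_1, and for t ≥ 2 define recursively P̃_{j,t} = Σ_{i∈𝒩_{t−1}} P̃_{i,t−1}·exp(−α·l_{t−1}(θ_{i,t−1}))·τ_t(i,j); let P_{i,t} = P̃_{i,t} / Σ_{j∈𝒩_t} P̃_{j,t} (assume the denominators are positive), and let the algorithm's output be θ̂_t = F applied to the family (θ_{i,t}, P_{i,t})_{i∈𝒩_t}. Then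 for every sequence of experts I_t ∈ 𝒩_t (t = 1,…,T) with τ_t(I_{t−1},I_t) > 0 for all 2 ≤ t ≤ T, one has Σ_{t=1}^T l_t(θ̂_t) ≤ Σ_{t=1}^T l_t(θ_{I_t,t}) + (1/α)·( −log P_{I_1,1} − Σ_{t=2}^T log τ_t(I_{t−1},I_t) ). -/
/-- Mixture transition loss bound: an online mixture of hyper-experts under
α-mixable losses, with transition weighting, is upper bounded by the loss of
any expert path plus the path's negative log-probability divided by α. -/
theorem mixture_transition_loss_bound
    {Θ : Type*} [Nonempty Θ] {ι : Type*}
    (α : ℝ) (hα : 0 < α) (T : ℕ) (hT : 1 ≤ T)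
    (l : ℕ → Θ → ℝ)
    (F : Finset ι → (ι → Θ) → (ι → ℝ) → Θ)
    -- α-mixability of each loss l t with common surrogate F:
    (hmix : ∀ t ∈ Finset.Icc 1 T, ∀ (s : Finset ι) (θ : ι → Θ) (P : ι → ℝ),
      (∀ i ∈ s, 0 ≤ P i) → (∑ i ∈ s, P i) = 1 →
      ∑ i ∈ s, P i * Real.exp (-α * l t (θ i)) ≤ Real.exp (-α * l t (F s θ P)))
    -- expert sets and their predictions:
    (N : ℕ → Finset ι) (hN : ∀ t ∈ Finset.Icc 1 T, (N t).Nonempty)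
    (θ : ι → ℕ → Θ)
    -- transition weights:
    (τ : ℕ → ι → ι → ℝ)
    (hτ0 : ∀ t i j, 0 ≤ τ t i j)
    (hτ1 : ∀ t ∈ Finset.Icc 2 T, ∀ i, (∑ j ∈ N t, τ t i j) ≤ 1)
    -- unnormalized weights P̃ and their recursion:
    (Ptil : ℕ → ι → ℝ)
    (hPinit : ∀ i ∈ N 1, 0 < Ptil 1 i)
    (hPrec : ∀ t ∈ Finset.Icc 2 T, ∀ j,
      Ptil t j = ∑ i ∈ N (t - 1),
        Ptil (t - 1) i * Real.exp (-α * l (t - 1) (θ i (t - 1))) * τ t i j)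
    (hden : ∀ t ∈ Finset.Icc 1 T, 0 < ∑ j ∈ N t, Ptil t j)
    -- normalized weights:
    (P : ℕ → ι → ℝ)
    (hPdef : ∀ t i, P t i = Ptil t i / ∑ j ∈ N t, Ptil t j)
    -- algorithm outputs:
    (θhat : ℕ → Θ)
    (hθhat : ∀ t ∈ Finset.Icc 1 T, θhat t = F (N t) (fun i => θ i t) (P t))
    -- an arbitrary expert path:
    (I : ℕ → ι)
    (hI : ∀ t ∈ Finset.Icc 1 T, I t ∈ N t)
    (hIτ : ∀ t ∈ Finset.Icc 2 T, 0 < τ t (I (t - 1)) (I t)) :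
    ∑ t ∈ Finset.Icc 1 T, l t (θhat t) ≤
      (∑ t ∈ Finset.Icc 1 T, l t (θ (I t) t)) +
        (1 / α) * (-Real.log (P 1 (I 1)) -
          ∑ t ∈ Finset.Icc 2 T, Real.log (τ t (I (t - 1)) (I t))) := by
  have hmem : ∀ n, 1 ≤ n → n ≤ T → n ∈ Finset.Icc 1 T := fun n h1 h2 =>
    Finset.mem_Icc.mpr ⟨h1, h2⟩
  -- nonnegativity of the weights
  have hnn : ∀ n, 1 ≤ n → n ≤ T → ∀ i ∈ N n, 0 ≤ Ptil n i := by
    intro n hn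
    induction n, hn using Nat.le_induction with
    | base => exact fun _ i hi => (hPinit i hi).le
    | succ n hn ih =>
      intro hT' j _
      rw [hPrec (n + 1) (Finset.mem_Icc.mpr ⟨by omega, hT'⟩) j]
      simp only [Nat.add_sub_cancel]
      exact Finset.sum_nonneg fun i hi =>
        mul_nonneg (mul_nonneg (ih (by omega) i hi) (Real.exp_pos _).le) (hτ0 _ _ _)
  -- mixability step
  have hA : ∀ n, 1 ≤ n → n ≤ T →
      ∑ i ∈ N n, Ptil n i * Real.exp (-α * l n (θ i n)) ≤
        (∑ i ∈ N n, Ptil n i) * Real.exp (-α * l n (θhat n)) := by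
    intro n h1 h2
    have hW := hden n (hmem n h1 h2)
    have h := hmix n (hmem n h1 h2) (N n) (fun i => θ i n) (P n)
      (fun i hi => by rw [hPdef]; exact div_nonneg (hnn n h1 h2 i hi) hW.le)
      (by simp only [hPdef]; rw [← Finset.sum_div]; exact div_self hW.ne')
    rw [← hθhat n (hmem n h1 h2)] at h
    have h' := mul_le_mul_of_nonneg_left h hW.le
    refine le_trans (le_of_eq ?_) h'
    rw [Finset.mul_sum]
    refine Finset.sum_congr rfl fun i _ => ?_
    rw [hPdef]
    field_simp
  -- total weight bound
  have hup : ∀ n, 1 ≤ n → n ≤ T →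
      ∑ i ∈ N n, Ptil n i * Real.exp (-α * l n (θ i n)) ≤
        (∑ i ∈ N 1, Ptil 1 i) * Real.exp (-α * ∑ t ∈ Finset.Icc 1 n, l t (θhat t)) := by
    intro n hn
    induction n, hn using Nat.le_induction with
    | base => intro h; simpa using hA 1 le_rfl h
    | succ n hn ih =>
      intro hT'
      have hstep : ∑ j ∈ N (n + 1), Ptil (n + 1) j ≤
          ∑ i ∈ N n, Ptil n i * Real.exp (-α * l n (θ i n)) := by
        have hm : n + 1 ∈ Finset.Icc 2 T := Finset.mem_Icc.mpr ⟨by omega, hT'⟩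
        rw [Finset.sum_congr rfl fun j _ => hPrec (n + 1) hm j]
        simp only [Nat.add_sub_cancel]
        rw [Finset.sum_comm]
        refine Finset.sum_le_sum fun i hi => ?_
        rw [← Finset.mul_sum]
        exact mul_le_of_le_one_right
          (mul_nonneg (hnn n hn (by omega) i hi) (Real.exp_pos _).le) (hτ1 _ hm i)
      refine (hA (n + 1) (by omega) hT').trans ?_
      rw [Finset.sum_Icc_succ_top (by omega), mul_add, Real.exp_add, ← mul_assoc]
      exact mul_le_mul_of_nonneg_right (hstep.trans (ih (by omega))) (Real.exp_pos _).le
  -- path lower bound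
  have hlow : ∀ n, 1 ≤ n → n ≤ T →
      Ptil 1 (I 1) * Real.exp (∑ t ∈ Finset.Icc 2 n, Real.log (τ t (I (t - 1)) (I t))) *
        Real.exp (-α * ∑ t ∈ Finset.Icc 1 n, l t (θ (I t) t)) ≤
      Ptil n (I n) * Real.exp (-α * l n (θ (I n) n)) := by
    intro n hn
    induction n, hn using Nat.le_induction with
    | base => intro h; simp
    | succ n hn ih =>
      intro hT'
      have hm : n + 1 ∈ Finset.Icc 2 T := Finset.mem_Icc.mpr ⟨by omega, hT'⟩
      have hτp := hIτ (n + 1) hm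
      have hstep : Ptil n (I n) * Real.exp (-α * l n (θ (I n) n)) * τ (n + 1) (I n) (I (n + 1))
          ≤ Ptil (n + 1) (I (n + 1)) := by
        rw [hPrec (n + 1) hm]
        simp only [Nat.add_sub_cancel]
        exact Finset.single_le_sum
          (f := fun i => Ptil n i * Real.exp (-α * l n (θ i n)) * τ (n + 1) i (I (n + 1)))
          (fun i hi => mul_nonneg (mul_nonneg (hnn n hn (by omega) i hi)
            (Real.exp_pos _).le) (hτ0 _ _ _)) (hI n (hmem n hn (by omega)))
      rw [Finset.sum_Icc_succ_top (by omega), Finset.sum_Icc_succ_top (by omega), mul_add,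
        Real.exp_add, Real.exp_add, Real.exp_log hτp]
      simp only [Nat.add_sub_cancel] at hτp ⊢
      have h2 := (mul_le_mul_of_nonneg_right (ih (by omega)) hτp.le).trans hstep
      have h3 := mul_le_mul_of_nonneg_right h2
        (Real.exp_pos (-α * l (n + 1) (θ (I (n + 1)) (n + 1)))).le
      refine le_trans (le_of_eq ?_) h3
      ring
  have hW := hden 1 (hmem 1 le_rfl hT)
  have hp := hPinit (I 1) (hI 1 (hmem 1 le_rfl hT))
  have hsingle : Ptil T (I T) * Real.exp (-α * l T (θ (I T) T)) ≤
      ∑ i ∈ N T, Ptil T i * Real.exp (-α * l T (θ i T)) :=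
    Finset.single_le_sum (f := fun i => Ptil T i * Real.exp (-α * l T (θ i T)))
      (fun i hi => mul_nonneg (hnn T hT le_rfl i hi) (Real.exp_pos _).le)
      (hI T (hmem T hT le_rfl))
  have hfin := ((hlow T hT le_rfl).trans hsingle).trans (hup T hT le_rfl)
  have hlog := Real.log_le_log (by positivity) hfin
  rw [Real.log_mul (by positivity) (by positivity), Real.log_mul (by positivity) (by positivity),
    Real.log_mul (by positivity) (by positivity), Real.log_exp, Real.log_exp, Real.log_exp] at hlog
  rw [hPdef, Real.log_div hp.ne' hW.ne', ← sub_le_iff_le_add', one_div, inv_mul_eq_div,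
    le_div_iff₀ hα]
  linarith
end

section
/- (Regret decomposition.) Under the same mixture framework as the mixture transition loss bound — α > 0, losses l_t : Θ → ℝ that are α-mixable with a common surrogate F, finite expert sets 𝒩_t with predictions θ_{i,t}, transition weights τ_t(i,j) ≥ 0 with Σ_{j∈𝒩_t} τ_t(i,j) ≤ 1, recursively defined weights P̃_{j,t} = Σ_{i∈𝒩_{t−1}} P̃_{i,t−1}·exp(−α·l_{t−1}(θ_{i,t−1}))·τ_t(i,j) with positive initial weights and positive normalizers, and final predictions θ̂_t = F((θ_{i,t},P_{i,t})_{i∈𝒩_t}) — let 0 = T_0 < T_1 < … < T_S = T be a partition of the horizon into S segments with comparator points θ*_s ∈ Θ for s = 1,…,S, and let I_t ∈ 𝒩_t be any expert sequence with τ_t(I_{t−1},I_t) > 0 for 2 ≤ t ≤ T. Then the dynamic regret satisfies Σ_{s=1}^{S} Σ_{t=T_{s−1}+1}^{T_s} ( l_t(θ̂_t) − l_t(θ*_s) ) ≤ E + (1/α)·W, where E = Σ_{s=1}^{S} Σ_{t=T_{s−1}+1}^{T_s} ( l_t(θ_{I_t,t}) − l_t(θ*_s) ) is the expert regret and W = −log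 P_{I_1,1} − Σ_{t=2}^T log τ_t(I_{t−1},I_t) is the mixture regret. -/
theorem seg_sum_aux (f : ℕ → ℝ) (Tb : ℕ → ℕ) (hTb0 : Tb 0 = 0) (S : ℕ)
    (hTbmono : ∀ s < S, Tb s < Tb (s + 1)) :
    ∑ s ∈ Finset.Icc 1 S, ∑ t ∈ Finset.Icc (Tb (s - 1) + 1) (Tb s), f t =
      ∑ t ∈ Finset.Icc 1 (Tb S), f t := by
  induction S with
  | zero => simp [hTb0]
  | succ k ih =>
    have hk := hTbmono k (Nat.lt_succ_self k)
    rw [Finset.sum_Icc_succ_top (by omega), ih (fun s hs => hTbmono s (by omega))]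
    simp only [Nat.add_sub_cancel]
    rw [← Finset.sum_union]
    · congr 1
      ext x
      simp only [Finset.mem_union, Finset.mem_Icc]
      omega
    · rw [Finset.disjoint_left]
      intro x hx hy
      simp only [Finset.mem_Icc] at hx hy
      omega

/-- Regret decomposition: under the mixture framework with α-mixable losses,
the dynamic regret against a comparator that is constant on each of S segments
decomposes into the expert regret E plus (1/α) times the mixture regret W. -/
theorem regret_decomposition
    {Θ : Type*} [Nonempty Θ] {ι : Type*}
    (α : ℝ) (hα : 0 < α) (T : ℕ) (hT : 1 ≤ T)
    (l : ℕ → Θ → ℝ)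
    (F : Finset ι → (ι → Θ) → (ι → ℝ) → Θ)
    -- α-mixability of each loss l t with common surrogate F:
    (hmix : ∀ t ∈ Finset.Icc 1 T, ∀ (s : Finset ι) (θ : ι → Θ) (P : ι → ℝ),
      (∀ i ∈ s, 0 ≤ P i) → (∑ i ∈ s, P i) = 1 →
      ∑ i ∈ s, P i * Real.exp (-α * l t (θ i)) ≤ Real.exp (-α * l t (F s θ P)))
    -- expert sets and their predictions:
    (N : ℕ → Finset ι) (hN : ∀ t ∈ Finset.Icc 1 T, (N t).Nonempty)
    (θ : ι → ℕ → Θ)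
    -- transition weights:
    (τ : ℕ → ι → ι → ℝ)
    (hτ0 : ∀ t i j, 0 ≤ τ t i j)
    (hτ1 : ∀ t ∈ Finset.Icc 2 T, ∀ i, (∑ j ∈ N t, τ t i j) ≤ 1)
    -- unnormalized weights P̃ and their recursion:
    (Ptil : ℕ → ι → ℝ)
    (hPinit : ∀ i ∈ N 1, 0 < Ptil 1 i)
    (hPrec : ∀ t ∈ Finset.Icc 2 T, ∀ j,
      Ptil t j = ∑ i ∈ N (t - 1),
        Ptil (t - 1) i * Real.exp (-α * l (t - 1) (θ i (t - 1))) * τ t i j)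
    (hden : ∀ t ∈ Finset.Icc 1 T, 0 < ∑ j ∈ N t, Ptil t j)
    -- normalized weights:
    (P : ℕ → ι → ℝ)
    (hPdef : ∀ t i, P t i = Ptil t i / ∑ j ∈ N t, Ptil t j)
    -- algorithm outputs:
    (θhat : ℕ → Θ)
    (hθhat : ∀ t ∈ Finset.Icc 1 T, θhat t = F (N t) (fun i => θ i t) (P t))
    -- segmentation 0 = T_0 < T_1 < ... < T_S = T with comparators θ*_s:
    (S : ℕ) (hS : 1 ≤ S)
    (Tb : ℕ → ℕ) (hTb0 : Tb 0 = 0) (hTbS : Tb S = T)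
    (hTbmono : ∀ s < S, Tb s < Tb (s + 1))
    (θstar : ℕ → Θ)
    -- an arbitrary expert path:
    (I : ℕ → ι)
    (hI : ∀ t ∈ Finset.Icc 1 T, I t ∈ N t)
    (hIτ : ∀ t ∈ Finset.Icc 2 T, 0 < τ t (I (t - 1)) (I t)) :
    ∑ s ∈ Finset.Icc 1 S, ∑ t ∈ Finset.Icc (Tb (s - 1) + 1) (Tb s),
        (l t (θhat t) - l t (θstar s)) ≤
      (∑ s ∈ Finset.Icc 1 S, ∑ t ∈ Finset.Icc (Tb (s - 1) + 1) (Tb s),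
          (l t (θ (I t) t) - l t (θstar s))) +
        (1 / α) * (-Real.log (P 1 (I 1)) -
          ∑ t ∈ Finset.Icc 2 T, Real.log (τ t (I (t - 1)) (I t))) := by
  have hnn : ∀ n, n + 1 ≤ T → ∀ i ∈ N (n + 1), 0 ≤ Ptil (n + 1) i := by
    intro n
    induction n with
    | zero => intro _ i hi; exact (hPinit i hi).le
    | succ n ih =>
      intro hn j _
      rw [hPrec (n + 1 + 1) (Finset.mem_Icc.2 ⟨by omega, hn⟩) j]
      simp only [Nat.add_sub_cancel]
      exact Finset.sum_nonneg fun i hi =>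
        mul_nonneg (mul_nonneg (ih (by omega) i hi) (Real.exp_pos _).le) (hτ0 _ _ _)
  -- mixability step
  have hA : ∀ n, n + 1 ≤ T →
      ∑ i ∈ N (n + 1), Ptil (n + 1) i * Real.exp (-α * l (n + 1) (θ i (n + 1))) ≤
        (∑ j ∈ N (n + 1), Ptil (n + 1) j) * Real.exp (-α * l (n + 1) (θhat (n + 1))) := by
    intro n hn
    have hmem : n + 1 ∈ Finset.Icc 1 T := Finset.mem_Icc.2 ⟨by omega, hn⟩
    have hD := hden _ hmem
    have h := hmix _ hmem (N (n + 1)) (fun i => θ i (n + 1)) (P (n + 1))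
      (fun i hi => by rw [hPdef]; exact div_nonneg (hnn n hn i hi) hD.le)
      (by simp only [hPdef]; rw [← Finset.sum_div]; exact div_self hD.ne')
    rw [← hθhat _ hmem] at h
    have h2 := mul_le_mul_of_nonneg_left h hD.le
    refine le_trans (le_of_eq ?_) h2
    rw [Finset.mul_sum]
    refine Finset.sum_congr rfl fun i _ => ?_
    rw [hPdef]
    field_simp
  have hD : ∀ n, n + 1 ≤ T →
      Real.log (∑ j ∈ N (n + 1), Ptil (n + 1) j) ≤
        Real.log (∑ j ∈ N 1, Ptil 1 j) - α * ∑ t ∈ Finset.Icc 1 n, l t (θhat t) := by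
    intro n
    induction n with
    | zero => intro _; simp
    | succ n ih =>
      intro hn
      have ih := ih (by omega)
      have hp := hden (n + 1) (Finset.mem_Icc.2 ⟨by omega, by omega⟩)
      have hp2 := hden (n + 1 + 1) (Finset.mem_Icc.2 ⟨by omega, by omega⟩)
      have hle : ∑ j ∈ N (n + 1 + 1), Ptil (n + 1 + 1) j ≤
          ∑ i ∈ N (n + 1), Ptil (n + 1) i * Real.exp (-α * l (n + 1) (θ i (n + 1))) := by
        have hm : n + 1 + 1 ∈ Finset.Icc 2 T := Finset.mem_Icc.2 ⟨by omega, hn⟩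
        rw [Finset.sum_congr rfl (fun j _ => hPrec (n + 1 + 1) hm j), Finset.sum_comm]
        simp only [Nat.add_sub_cancel]
        refine Finset.sum_le_sum fun i hi => ?_
        rw [← Finset.mul_sum]
        exact mul_le_of_le_one_right
          (mul_nonneg (hnn n (by omega) i hi) (Real.exp_pos _).le) (hτ1 _ hm i)
      have h3 := Real.log_le_log hp2 (hle.trans (hA n (by omega)))
      rw [Real.log_mul hp.ne' (Real.exp_pos _).ne', Real.log_exp] at h3
      rw [Finset.sum_Icc_succ_top (by omega)]
      linarith
  have hQ : ∀ n, n + 1 ≤ T → 0 < Ptil (n + 1) (I (n + 1)) ∧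
      Real.log (Ptil 1 (I 1)) - α * ∑ t ∈ Finset.Icc 1 n, l t (θ (I t) t) +
        ∑ t ∈ Finset.Icc 2 (n + 1), Real.log (τ t (I (t - 1)) (I t)) ≤
      Real.log (Ptil (n + 1) (I (n + 1))) := by
    intro n
    induction n with
    | zero => intro h; exact ⟨hPinit _ (hI 1 (Finset.mem_Icc.2 ⟨le_rfl, hT⟩)), by simp⟩
    | succ n ih =>
      intro hn
      obtain ⟨ip, ih⟩ := ih (by omega)
      have hm : n + 1 + 1 ∈ Finset.Icc 2 T := Finset.mem_Icc.2 ⟨by omega, hn⟩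
      have hτp := hIτ _ hm
      simp only [Nat.add_sub_cancel] at hτp
      have hle : Ptil (n + 1) (I (n + 1)) *
          Real.exp (-α * l (n + 1) (θ (I (n + 1)) (n + 1))) *
          τ (n + 1 + 1) (I (n + 1)) (I (n + 1 + 1)) ≤ Ptil (n + 1 + 1) (I (n + 1 + 1)) := by
        rw [hPrec _ hm (I (n + 1 + 1))]
        simp only [Nat.add_sub_cancel]
        exact Finset.single_le_sum (f := fun i => Ptil (n + 1) i *
          Real.exp (-α * l (n + 1) (θ i (n + 1))) * τ (n + 1 + 1) i (I (n + 1 + 1)))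
          (fun i hi => mul_nonneg (mul_nonneg (hnn n (by omega) i hi) (Real.exp_pos _).le)
            (hτ0 _ _ _)) (hI (n + 1) (Finset.mem_Icc.2 ⟨by omega, by omega⟩))
      have hpos := mul_pos (mul_pos ip
        (Real.exp_pos (-α * l (n + 1) (θ (I (n + 1)) (n + 1))))) hτp
      refine ⟨hpos.trans_le hle, ?_⟩
      have h3 := Real.log_le_log hpos hle
      rw [Real.log_mul (mul_pos ip (Real.exp_pos _)).ne' hτp.ne',
        Real.log_mul ip.ne' (Real.exp_pos _).ne', Real.log_exp] at h3
      rw [Finset.sum_Icc_succ_top (by omega), Finset.sum_Icc_succ_top (by omega)]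
      simp only [Nat.add_sub_cancel]
      linarith
  obtain ⟨n, rfl⟩ : ∃ n, T = n + 1 := ⟨T - 1, by omega⟩
  obtain ⟨qp, hq⟩ := hQ n le_rfl
  have hd := hD n le_rfl
  have hp := hden (n + 1) (Finset.mem_Icc.2 ⟨by omega, le_rfl⟩)
  have hp1 := hden 1 (Finset.mem_Icc.2 ⟨le_rfl, hT⟩)
  have hq1 := hPinit _ (hI 1 (Finset.mem_Icc.2 ⟨le_rfl, hT⟩))
  have hle : Ptil (n + 1) (I (n + 1)) *
      Real.exp (-α * l (n + 1) (θ (I (n + 1)) (n + 1))) ≤ _ :=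
    (Finset.single_le_sum (f := fun i => Ptil (n + 1) i *
      Real.exp (-α * l (n + 1) (θ i (n + 1))))
      (fun i hi => mul_nonneg (hnn n le_rfl i hi) (Real.exp_pos _).le)
      (hI (n + 1) (Finset.mem_Icc.2 ⟨by omega, le_rfl⟩))).trans (hA n le_rfl)
  have h3 := Real.log_le_log (mul_pos qp (Real.exp_pos _)) hle
  rw [Real.log_mul qp.ne' (Real.exp_pos _).ne', Real.log_mul hp.ne' (Real.exp_pos _).ne',
    Real.log_exp, Real.log_exp] at h3
  have hlP : Real.log (P 1 (I 1)) =
      Real.log (Ptil 1 (I 1)) - Real.log (∑ j ∈ N 1, Ptil 1 j) := by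
    rw [hPdef, Real.log_div hq1.ne' hp1.ne']
  simp only [Finset.sum_sub_distrib]
  rw [seg_sum_aux (fun t => l t (θhat t)) Tb hTb0 S hTbmono,
    seg_sum_aux (fun t => l t (θ (I t) t)) Tb hTb0 S hTbmono, hTbS]
  have key : α * (∑ t ∈ Finset.Icc 1 (n + 1), l t (θhat t) -
      ∑ t ∈ Finset.Icc 1 (n + 1), l t (θ (I t) t)) ≤
      -Real.log (P 1 (I 1)) -
        ∑ t ∈ Finset.Icc 2 (n + 1), Real.log (τ t (I (t - 1)) (I t)) := by
    rw [Finset.sum_Icc_succ_top (by omega) (fun t => l t (θhat t)),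
      Finset.sum_Icc_succ_top (by omega) (fun t => l t (θ (I t) t)), hlP]
    linarith
  have key2 := (le_div_iff₀' hα).2 key
  rw [div_eq_inv_mul, ← one_div] at key2
  linarith
end

section
/- (1/2-mixability of the square loss with Vovk's substitution function.) Let n ≥ 1, let P_1,…,P_n be nonnegative reals with Σ_{i=1}^n P_i = 1, let θ_1,…,θ_n ∈ [−1,1], and define the aggregated prediction θ̂ = (1/2)·( log( Σ_{i=1}^n P_i·exp(−(θ_i − 1)²/2) ) − log( Σ_{i=1}^n P_i·exp(−(θ_i + 1)²/2) ) ). Then for every x ∈ [−1,1], exp(−(θ̂ − x)²/2) ≥ Σ_{i=1}^n P_i·exp(−(θ_i − x)²/2). -/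
open MeasureTheory ProbabilityTheory in
/-- Two-point Hoeffding lemma. -/
lemma two_point_hoeffding (t d : ℝ) (h1 : -1 ≤ t) (h2 : t ≤ 1) :
    (1 + t) / 2 * Real.exp (d * (1 - t)) + (1 - t) / 2 * Real.exp (d * (-1 - t))
      ≤ Real.exp (d ^ 2 / 2) := by
  have hp : 0 ≤ (1 + t) / 2 := by linarith
  have hq : 0 ≤ (1 - t) / 2 := by linarith
  let μ : Measure ℝ := ENNReal.ofReal ((1 + t) / 2) • Measure.dirac (1 - t)
    + ENNReal.ofReal ((1 - t) / 2) • Measure.dirac (-1 - t)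
  have hint : ∀ f : ℝ → ℝ, ∫ y, f y ∂μ
      = (1 + t) / 2 * f (1 - t) + (1 - t) / 2 * f (-1 - t) := by
    intro f
    have i1 : ∀ a : ℝ, Integrable f (Measure.dirac a) := fun a =>
      integrable_dirac (by simp)
    rw [integral_add_measure ((i1 _).smul_measure ENNReal.ofReal_ne_top)
      ((i1 _).smul_measure ENNReal.ofReal_ne_top), integral_smul_measure,
      integral_smul_measure, integral_dirac, integral_dirac,
      ENNReal.toReal_ofReal hp, ENNReal.toReal_ofReal hq]
    simp
  have hprob : IsProbabilityMeasure μ := by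
    constructor
    simp only [μ, Measure.add_apply, Measure.smul_apply, measure_univ, smul_eq_mul, mul_one]
    rw [← ENNReal.ofReal_add hp hq]
    ring_nf
    simp
  have hb : ∀ᵐ y ∂μ, id y ∈ Set.Icc (-1 - t) (1 - t) := by
    rw [ae_add_measure_iff]
    constructor <;> apply Measure.ae_smul_measure <;> rw [ae_dirac_eq] <;>
      simp
  have hs := hasSubgaussianMGF_of_mem_Icc_of_integral_eq_zero (X := id) (μ := μ)
    aemeasurable_id hb (by rw [hint]; simp only [id]; ring)
  have := hs.mgf_le d
  rw [mgf, hint] at this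
  simp only [id] at this
  refine this.trans (le_of_eq ?_)
  congr 1
  have : 1 - t - (-1 - t) = 2 := by ring
  rw [this]
  simp

/-- 1/2-mixability of the square loss on [-1,1] with Vovk's substitution
function as surrogate. -/
theorem square_loss_half_mixable
    (n : ℕ) (hn : 1 ≤ n)
    (P : Fin n → ℝ) (hP : ∀ i, 0 ≤ P i) (hPsum : ∑ i, P i = 1)
    (θ : Fin n → ℝ) (hθ : ∀ i, θ i ∈ Set.Icc (-1 : ℝ) 1)
    (θhat : ℝ)
    (hθhat : θhat = (1 / 2) *
      (Real.log (∑ i, P i * Real.exp (-(θ i - 1) ^ 2 / 2)) -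
        Real.log (∑ i, P i * Real.exp (-(θ i + 1) ^ 2 / 2))))
    (x : ℝ) (hx : x ∈ Set.Icc (-1 : ℝ) 1) :
    ∑ i, P i * Real.exp (-(θ i - x) ^ 2 / 2) ≤ Real.exp (-(θhat - x) ^ 2 / 2) := by
  obtain ⟨hx1, hx2⟩ := hx
  set u := ∑ i, P i * Real.exp (-(θ i - 1) ^ 2 / 2) with hu
  set v := ∑ i, P i * Real.exp (-(θ i + 1) ^ 2 / 2) with hv
  obtain ⟨j, hj⟩ : ∃ j, 0 < P j := by
    by_contra! h
    have : ∑ i, P i ≤ 0 := Finset.sum_nonpos fun i _ => h i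
    linarith
  have hpos : ∀ f : Fin n → ℝ, 0 < ∑ i, P i * Real.exp (f i) := fun f =>
    Finset.sum_pos' (fun i _ => mul_nonneg (hP i) (Real.exp_pos _).le)
      ⟨j, Finset.mem_univ _, mul_pos hj (Real.exp_pos _)⟩
  have hu0 : 0 < u := hpos _
  have hv0 : 0 < v := hpos _
  have huv : u = Real.exp (2 * θhat) * v := by
    have : Real.log u = 2 * θhat + Real.log v := by rw [hθhat]; ring
    rw [← Real.exp_log hu0, this, Real.exp_add, Real.exp_log hv0]
  have hterm : ∀ i, Real.exp (-(θ i - 1) ^ 2 / 2)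
      = Real.exp (2 * θ i) * Real.exp (-(θ i + 1) ^ 2 / 2) := by
    intro i
    rw [← Real.exp_add]; congr 1; ring
  have ht1 : θhat ≤ 1 := by
    have : u ≤ Real.exp (2 * 1) * v := by
      rw [hu, hv, Finset.mul_sum]
      refine Finset.sum_le_sum fun i _ => ?_
      rw [hterm, mul_left_comm]
      refine mul_le_mul_of_nonneg_right (Real.exp_le_exp.2 ?_)
        (mul_nonneg (hP i) (Real.exp_pos _).le)
      linarith [(hθ i).2]
    rw [huv] at this
    have := Real.exp_le_exp.1 (le_of_mul_le_mul_right this hv0)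
    linarith
  have ht2 : -1 ≤ θhat := by
    have : Real.exp (2 * (-1)) * v ≤ u := by
      rw [hu, hv, Finset.mul_sum]
      refine Finset.sum_le_sum fun i _ => ?_
      rw [hterm, mul_left_comm (P i)]
      refine mul_le_mul_of_nonneg_right (Real.exp_le_exp.2 ?_)
        (mul_nonneg (hP i) (Real.exp_pos _).le)
      linarith [(hθ i).1]
    rw [huv] at this
    have := Real.exp_le_exp.1 (le_of_mul_le_mul_right this hv0)
    linarith
  -- normalised ratios at the two extreme outcomes
  set A := ∑ i, P i * Real.exp ((θhat ^ 2 - θ i ^ 2) / 2 + (θ i - θhat)) with hA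
  set B := ∑ i, P i * Real.exp ((θhat ^ 2 - θ i ^ 2) / 2 - (θ i - θhat)) with hB
  have hAu : A = Real.exp ((θhat - 1) ^ 2 / 2) * u := by
    rw [hA, hu, Finset.mul_sum]
    refine Finset.sum_congr rfl fun i _ => ?_
    rw [mul_left_comm, ← Real.exp_add]; congr 2; ring
  have hBv : B = Real.exp ((θhat + 1) ^ 2 / 2) * v := by
    rw [hB, hv, Finset.mul_sum]
    refine Finset.sum_congr rfl fun i _ => ?_
    rw [mul_left_comm, ← Real.exp_add]; congr 2; ring
  have hAB : A = B := by
    rw [hAu, hBv, huv, ← mul_assoc, ← Real.exp_add]; congr 2; ring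
  have hcomb : (1 + θhat) / 2 * A + (1 - θhat) / 2 * B ≤ 1 := by
    rw [hA, hB, Finset.mul_sum, Finset.mul_sum, ← Finset.sum_add_distrib]
    refine le_trans ?_ hPsum.le
    refine Finset.sum_le_sum fun i _ => ?_
    have h := two_point_hoeffding θhat (θ i - θhat) ht2 ht1
    have h' := mul_le_mul_of_nonneg_left h
      (mul_nonneg (hP i) (Real.exp_pos (-(θ i - θhat) ^ 2 / 2)).le)
    have e0 : Real.exp (-(θ i - θhat) ^ 2 / 2) * Real.exp ((θ i - θhat) ^ 2 / 2) = 1 := by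
      rw [← Real.exp_add, ← Real.exp_zero]; congr 1; ring
    have e1 : Real.exp ((θhat ^ 2 - θ i ^ 2) / 2 + (θ i - θhat))
        = Real.exp (-(θ i - θhat) ^ 2 / 2) * Real.exp ((θ i - θhat) * (1 - θhat)) := by
      rw [← Real.exp_add]; congr 1; ring
    have e2 : Real.exp ((θhat ^ 2 - θ i ^ 2) / 2 - (θ i - θhat))
        = Real.exp (-(θ i - θhat) ^ 2 / 2) * Real.exp ((θ i - θhat) * (-1 - θhat)) := by
      rw [← Real.exp_add]; congr 1; ring
    rw [mul_assoc (P i) _ (Real.exp ((θ i - θhat) ^ 2 / 2)), e0, mul_one] at h'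
    rw [e1, e2]
    refine le_trans (le_of_eq ?_) h'
    ring
  have hA1 : A ≤ 1 := by rw [← hAB] at hcomb; linarith
  have hconv : ∀ d : ℝ, Real.exp (d * x)
      ≤ (1 + x) / 2 * Real.exp d + (1 - x) / 2 * Real.exp (-d) := by
    intro d
    have := convexOn_exp.2 (Set.mem_univ d) (Set.mem_univ (-d))
      (show 0 ≤ (1 + x) / 2 by linarith) (show 0 ≤ (1 - x) / 2 by linarith) (by ring)
    simp only [smul_eq_mul] at this
    refine le_trans (le_of_eq ?_) this
    congr 1; ring
  have hfin : ∑ i, P i * Real.exp (-(θ i - x) ^ 2 / 2)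
      ≤ Real.exp (-(θhat - x) ^ 2 / 2) * ((1 + x) / 2 * A + (1 - x) / 2 * B) := by
    rw [hA, hB, Finset.mul_sum, Finset.mul_sum, ← Finset.sum_add_distrib, Finset.mul_sum]
    refine Finset.sum_le_sum fun i _ => ?_
    have e : Real.exp (-(θ i - x) ^ 2 / 2) = Real.exp (-(θhat - x) ^ 2 / 2) *
        Real.exp ((θhat ^ 2 - θ i ^ 2) / 2) * Real.exp ((θ i - θhat) * x) := by
      rw [← Real.exp_add, ← Real.exp_add]; congr 1; ring
    have h' := mul_le_mul_of_nonneg_left (hconv (θ i - θhat))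
      (mul_nonneg (hP i) (mul_pos (Real.exp_pos (-(θhat - x) ^ 2 / 2))
        (Real.exp_pos ((θhat ^ 2 - θ i ^ 2) / 2))).le)
    rw [e, sub_eq_add_neg (_ / 2) (θ i - θhat), Real.exp_add _ (θ i - θhat),
      Real.exp_add _ (-(θ i - θhat)), ← mul_assoc]
    refine h'.trans (le_of_eq ?_)
    ring
  refine hfin.trans (mul_le_of_le_one_right (Real.exp_pos _).le ?_)
  rw [← hAB]; linarith
end

section
/- (Complexity bound for the generic hyper-expert scheme.) Let α : ℕ → ℕ with α_n ≥ 1 and β : ℕ → ℕ, and define f : ℕ → ℕ by f_1 = 1 and f_n = α_n·f_{n−1} + β_n for n ≥ 2, where β_n ≤ f_{n−1} for all n ≥ 2; assume f is strictly increasing. Fix a natural number T with f_1 ≤ T and let n_T = max{ n ≥ 1 : f_n ≤ T } (assume f is unbounded so this maximum exists). Then the number of hyper-experts started by time T, namely the cardinality of the set { (n,k) : n ≥ 2, 1 ≤ k ≤ α_n, β_n + k·f_{n−1} ≤ T } , is at most Σ_{n=2}^{n_T+1} α_n, and hence at most n_T · max_{2 ≤ n ≤ n_T+1} α_n. -/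
/-- Complexity bound for the generic hyper-expert scheme: the number of
hyper-experts started by the time horizon T is at most Σ_{n=2}^{n_T+1} α_n,
and hence at most n_T · max_{2 ≤ n ≤ n_T+1} α_n. -/
theorem hyper_expert_complexity_bound
    (α β : ℕ → ℕ) (hα : ∀ n, 1 ≤ α n)
    (f : ℕ → ℕ) (hf1 : f 1 = 1)
    (hfrec : ∀ n, 2 ≤ n → f n = α n * f (n - 1) + β n)
    (hβ : ∀ n, 2 ≤ n → β n ≤ f (n - 1))
    (hfmono : ∀ m n, 1 ≤ m → m < n → f m < f n)
    (hfunbdd : ∀ M : ℕ, ∃ n, 1 ≤ n ∧ M < f n)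
    (T : ℕ) (hT : f 1 ≤ T)
    (nT : ℕ) (hnT1 : 1 ≤ nT) (hnTle : f nT ≤ T)
    (hnTmax : ∀ n, 1 ≤ n → f n ≤ T → n ≤ nT) :
    Set.ncard {p : ℕ × ℕ |
        2 ≤ p.1 ∧ 1 ≤ p.2 ∧ p.2 ≤ α p.1 ∧ β p.1 + p.2 * f (p.1 - 1) ≤ T}
      ≤ ∑ n ∈ Finset.Icc 2 (nT + 1), α n ∧
    Set.ncard {p : ℕ × ℕ |
        2 ≤ p.1 ∧ 1 ≤ p.2 ∧ p.2 ≤ α p.1 ∧ β p.1 + p.2 * f (p.1 - 1) ≤ T}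
      ≤ nT * (Finset.Icc 2 (nT + 1)).sup α := by
  have key : Set.ncard {p : ℕ × ℕ |
        2 ≤ p.1 ∧ 1 ≤ p.2 ∧ p.2 ≤ α p.1 ∧ β p.1 + p.2 * f (p.1 - 1) ≤ T}
      ≤ ∑ n ∈ Finset.Icc 2 (nT + 1), α n := by
    let S : Finset (ℕ × ℕ) := (Finset.Icc 2 (nT + 1)).biUnion
      (fun n => (Finset.Icc 1 (α n)).image (fun k => (n, k)))
    have hsub : {p : ℕ × ℕ |
        2 ≤ p.1 ∧ 1 ≤ p.2 ∧ p.2 ≤ α p.1 ∧ β p.1 + p.2 * f (p.1 - 1) ≤ T} ⊆ (S : Set (ℕ × ℕ)) := by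
      rintro ⟨n, k⟩ ⟨h1, h2, h3, h4⟩
      simp only at h1 h2 h3 h4
      have h5 : f (n - 1) ≤ k * f (n - 1) := Nat.le_mul_of_pos_left _ h2
      have h6 := hnTmax (n - 1) (by omega) (by omega)
      refine Finset.mem_coe.2 (Finset.mem_biUnion.2 ⟨n, Finset.mem_Icc.2 ⟨h1, by omega⟩, ?_⟩)
      exact Finset.mem_image.2 ⟨k, Finset.mem_Icc.2 ⟨h2, h3⟩, rfl⟩
    refine (Set.ncard_le_ncard hsub S.finite_toSet).trans ?_
    rw [Set.ncard_coe_finset]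
    refine Finset.card_biUnion_le.trans (Finset.sum_le_sum fun n _ => ?_)
    exact Finset.card_image_le.trans (by simp)
  refine ⟨key, key.trans ?_⟩
  refine (Finset.sum_le_card_nsmul _ _ _ fun n hn => Finset.le_sup hn).trans ?_
  simp
end

section
/- Let a > 0, b > 0, c > 1 be real numbers. Then there exists a natural number N ≥ 3 such that for all natural numbers n ≥ N, exp( a·( exp(b·(log n)^c) − exp(b·(log(n−1))^c) ) ) ≤ ( exp( a·exp(b·(log n)^c) ) )^{ b·c·(log n)^{c−1} / n }. -/
/-- Sub-polynomial ratio of consecutive periods: eventually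
exp(a·(exp(b·(log n)^c) − exp(b·(log(n−1))^c))) is at most
(exp(a·exp(b·(log n)^c)))^(b·c·(log n)^(c−1)/n). -/
theorem period_ratio_subpolynomial
    (a b c : ℝ) (ha : 0 < a) (hb : 0 < b) (hc : 1 < c) :
    ∃ N : ℕ, 3 ≤ N ∧ ∀ n : ℕ, N ≤ n →
      Real.exp (a * (Real.exp (b * Real.log n ^ c) -
          Real.exp (b * Real.log ((n : ℝ) - 1) ^ c))) ≤
        (Real.exp (a * Real.exp (b * Real.log n ^ c))) ^
          (b * c * Real.log n ^ (c - 1) / n) := by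
  have hev : ∀ᶠ x : ℝ in Filter.atTop, 1 / b ≤ Real.log x ^ (c - 1) :=
    ((tendsto_rpow_atTop (by linarith : 0 < c - 1)).comp
      Real.tendsto_log_atTop).eventually_ge_atTop (1 / b)
  obtain ⟨X, hX⟩ := Filter.eventually_atTop.1 hev
  obtain ⟨K, hK⟩ := exists_nat_ge X
  refine ⟨K + 3, by omega, fun n hn => ?_⟩
  have hn' : (K : ℝ) + 3 ≤ n := by exact_mod_cast hn
  have hK0 : (0 : ℝ) ≤ K := Nat.cast_nonneg K
  have hder : ∀ x : ℝ, 1 < x → HasDerivAt (fun x => Real.exp (b * Real.log x ^ c))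
      (Real.exp (b * Real.log x ^ c) * (b * (x⁻¹ * c * Real.log x ^ (c - 1)))) x := by
    intro x hx
    have h1 := Real.hasDerivAt_log (by linarith : x ≠ 0)
    have h2 := h1.rpow_const (p := c) (Or.inr hc.le)
    exact (h2.const_mul b).exp
  obtain ⟨y, ⟨hy1, hy2⟩, hy⟩ := exists_hasDerivAt_eq_slope
    (fun x => Real.exp (b * Real.log x ^ c))
    (fun x => Real.exp (b * Real.log x ^ c) * (b * (x⁻¹ * c * Real.log x ^ (c - 1))))
    (by linarith : (n : ℝ) - 1 < n)
    (fun x hx => (hder x (by linarith [hx.1])).continuousAt.continuousWithinAt)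
    (fun x hx => hder x (by linarith [hx.1]))
  have hy0 : 0 < y := by linarith
  have hn0 : (0 : ℝ) < n := by linarith
  have hl0 : 0 < Real.log y := Real.log_pos (by linarith)
  have hlM : Real.log y ≤ Real.log n := Real.log_le_log hy0 hy2.le
  have hbl : 1 / b ≤ Real.log y ^ (c - 1) := hX y (by linarith)
  have eM : Real.log n ^ c = Real.log n ^ (c - 1) * Real.log n := by
    rw [← Real.rpow_add_one (by linarith)]; simp
  have el : Real.log y ^ c = Real.log y ^ (c - 1) * Real.log y := by
    rw [← Real.rpow_add_one hl0.ne']; simp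
  have hpow : Real.log y ^ (c - 1) ≤ Real.log n ^ (c - 1) :=
    Real.rpow_le_rpow hl0.le hlM (by linarith)
  have hbl' : 1 ≤ b * Real.log y ^ (c - 1) := by
    rw [div_le_iff₀ hb] at hbl; linarith
  have hexpo : b * Real.log y ^ c - Real.log y ≤ b * Real.log n ^ c - Real.log n := by
    rw [eM, el]
    have h1 : b * Real.log y ^ (c - 1) * Real.log n ≤ b * Real.log n ^ (c - 1) * Real.log n := by
      have : 0 ≤ Real.log n := by linarith
      gcongr
    nlinarith [mul_nonneg (sub_nonneg.2 hbl') (sub_nonneg.2 hlM)]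
  have hE : Real.exp (b * Real.log y ^ c) * y⁻¹ ≤ Real.exp (b * Real.log n ^ c) * (n : ℝ)⁻¹ := by
    have := Real.exp_le_exp.2 hexpo
    rwa [Real.exp_sub, Real.exp_sub, Real.exp_log hy0, Real.exp_log hn0, div_eq_mul_inv,
      div_eq_mul_inv] at this
  have key : Real.exp (b * Real.log n ^ c) - Real.exp (b * Real.log ((n : ℝ) - 1) ^ c) ≤
      Real.exp (b * Real.log n ^ c) * (b * c * Real.log n ^ (c - 1) / n) := by
    have e1 : (n : ℝ) - (n - 1) = 1 := by ring
    rw [e1, div_one] at hy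
    rw [← hy]
    have hp0 : 0 ≤ Real.log y ^ (c - 1) := Real.rpow_nonneg hl0.le _
    calc _ = (Real.exp (b * Real.log y ^ c) * y⁻¹) * (b * c * Real.log y ^ (c - 1)) := by ring
      _ ≤ (Real.exp (b * Real.log n ^ c) * (n : ℝ)⁻¹) * (b * c * Real.log n ^ (c - 1)) := by
        have : 0 < c := by linarith
        gcongr
      _ = _ := by ring
  rw [← Real.exp_mul, Real.exp_le_exp, mul_assoc]
  exact mul_le_mul_of_nonneg_left key ha.le
end

section
/- Let a > 0, b > 0, c > 1 be real numbers and let ε > 0. Then there exists a natural number N ≥ 2 such that for all natural numbers n ≥ N, exp( a·exp(b·(log(n+1))^c) ) ≤ exp( a·exp(b·(log n)^c) ) · ( exp( a·exp(b·(log n)^c) ) )^{ε}. -/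
/-- Eventually the ratio of consecutive periods f_{n+1}/f_n (in the idealized
form f_n = exp(a·exp(b·(log n)^c))) is at most f_n^ε for every ε > 0. -/
theorem consecutive_period_ratio_le_pow
    (a b c ε : ℝ) (ha : 0 < a) (hb : 0 < b) (hc : 1 < c) (hε : 0 < ε) :
    ∃ N : ℕ, 2 ≤ N ∧ ∀ n : ℕ, N ≤ n →
      Real.exp (a * Real.exp (b * Real.log ((n : ℝ) + 1) ^ c)) ≤
        Real.exp (a * Real.exp (b * Real.log n ^ c)) *
          (Real.exp (a * Real.exp (b * Real.log n ^ c))) ^ ε := by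
  have hδ : 0 < Real.log (1 + ε) := Real.log_pos (by linarith)
  set δ := Real.log (1 + ε) with hδd
  have hη : 0 < δ / (2 * b * c) := by positivity
  have h1 := (isLittleO_log_rpow_rpow_atTop (c - 1) (zero_lt_one : (0 : ℝ) < 1)).bound hη
  obtain ⟨M, hM⟩ := Filter.eventually_atTop.1 h1
  refine ⟨max 2 ⌈M⌉₊, le_max_left _ _, fun n hn => ?_⟩
  have hn2 : (2 : ℝ) ≤ n := by exact_mod_cast (le_max_left _ _).trans hn
  have hnM : M ≤ n := (Nat.le_ceil M).trans (by exact_mod_cast (le_max_right _ _).trans hn)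
  have h2 := hM (n + 1) (by linarith)
  have hL : 0 < Real.log n := Real.log_pos (by linarith)
  have hL' : 0 < Real.log ((n : ℝ) + 1) := Real.log_pos (by linarith)
  have hd : Real.log ((n : ℝ) + 1) - Real.log n ≤ 1 / n := by
    rw [← Real.log_div (by positivity) (by positivity)]
    refine (Real.log_le_sub_one_of_pos (by positivity)).trans (le_of_eq ?_)
    field_simp
    ring
  set L := Real.log n
  set K := Real.log ((n : ℝ) + 1)
  rw [Real.rpow_one, Real.norm_of_nonneg (by positivity), Real.norm_of_nonneg (by positivity)] at h2
  have h3 : 1 + c * (L / K - 1) ≤ (L / K) ^ c := by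
    have := one_add_mul_self_le_rpow_one_add (s := L / K - 1) (by
      have : 0 < L / K := by positivity
      linarith) hc.le
    simpa using this
  rw [Real.div_rpow hL.le hL'.le] at h3
  have hKc : K ^ c = K ^ (c - 1) * K := by
    rw [← Real.rpow_add_one hL'.ne']; simp
  have hP : 0 < K ^ (c - 1) := by positivity
  have h4 : K ^ c - c * K ^ (c - 1) * (K - L) ≤ L ^ c := by
    rw [le_div_iff₀ (by positivity)] at h3
    refine le_trans (le_of_eq ?_) h3
    rw [hKc]; field_simp; ring
  have h5 : K ^ (c - 1) * (K - L) ≤ δ / (b * c) := by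
    calc K ^ (c - 1) * (K - L) ≤ K ^ (c - 1) * (1 / n) := by gcongr
      _ ≤ (δ / (2 * b * c) * (n + 1)) * (1 / n) := by gcongr
      _ ≤ (δ / (2 * b * c) * (2 * n)) * (1 / n) := by gcongr; linarith
      _ = δ / (b * c) := by field_simp
  have h6 : b * K ^ c ≤ b * L ^ c + δ := by
    rw [le_div_iff₀ (by positivity)] at h5
    nlinarith [mul_le_mul_of_nonneg_left h4 hb.le]
  rw [← Real.exp_mul, ← Real.exp_add]
  apply Real.exp_le_exp.2
  have h7 := Real.exp_le_exp.2 h6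
  rw [Real.exp_add, hδd, Real.exp_log (by linarith)] at h7
  nlinarith [mul_le_mul_of_nonneg_left h7 ha.le]
end

section
/- (Density of restart times in the generic scheme.) Let α : ℕ → ℕ with α_n ≥ 1 and β : ℕ → ℕ, and define f : ℕ → ℕ by f_1 = 1 and f_n = α_n·f_{n−1} + β_n for n ≥ 2, where β_n ≤ f_{n−1} for all n ≥ 2. Fix n ≥ 2 and let S_n = { β_n + k·f_{n−1} + j·f_n : 1 ≤ k ≤ α_n, j ∈ ℕ } be the set of restart times of the period-f_n hyper-experts. Then for every natural number τ there exists s ∈ S_n with τ ≤ s ≤ τ + f_{n−1} + β_n; in particular, consecutive restart times of period-f_n experts are at most f_{n−1} + β_n ≤ 2·f_{n−1} apart. -/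
/-- Density of restart times in the generic scheme: for each n ≥ 2, every
natural number τ is followed within f_{n−1} + β_n steps by a restart time
β_n + k·f_{n−1} + j·f_n (1 ≤ k ≤ α_n, j ∈ ℕ) of a period-f_n hyper-expert;
in particular, within 2·f_{n−1} steps. -/
theorem restart_time_density
    (α β : ℕ → ℕ) (hα : ∀ n, 1 ≤ α n)
    (f : ℕ → ℕ) (hf1 : f 1 = 1)
    (hfrec : ∀ n, 2 ≤ n → f n = α n * f (n - 1) + β n)
    (hβ : ∀ n, 2 ≤ n → β n ≤ f (n - 1))
    (n : ℕ) (hn : 2 ≤ n) (τ : ℕ) :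
    ∃ k j : ℕ, 1 ≤ k ∧ k ≤ α n ∧
      τ ≤ β n + k * f (n - 1) + j * f n ∧
      β n + k * f (n - 1) + j * f n ≤ τ + f (n - 1) + β n ∧
      β n + k * f (n - 1) + j * f n ≤ τ + 2 * f (n - 1) := by
  have hpos : ∀ m, 1 ≤ m → 0 < f m := by
    intro m hm
    induction m, hm using Nat.le_induction with
    | base => omega
    | succ m hm ih =>
      rw [hfrec (m + 1) (by omega), Nat.add_sub_cancel]
      have := Nat.mul_pos (hα (m + 1)) ih
      omega
  have hg := hpos (n - 1) (by omega)
  have hF := hpos n (by omega)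
  have hb := hβ n hn
  have hr := hfrec n hn
  have ha := hα n
  have h1 : τ / f n * f n + τ % f n = τ := Nat.div_add_mod' τ (f n)
  have h2 := Nat.mod_lt τ hF
  by_cases h : τ % f n < α n * f (n - 1)
  · have h3 := Nat.div_add_mod' (τ % f n) (f (n - 1))
    have h4 := Nat.mod_lt (τ % f n) hg
    have h5 : τ % f n / f (n - 1) < α n := (Nat.div_lt_iff_lt_mul hg).2 h
    refine ⟨τ % f n / f (n - 1) + 1, τ / f n, Nat.succ_pos _, h5, ?_⟩
    rw [Nat.add_mul, Nat.one_mul]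
    generalize τ % f n / f (n - 1) * f (n - 1) = x at *
    generalize τ / f n * f n = y at *
    refine ⟨?_, ?_, ?_⟩ <;> omega
  · refine ⟨α n, τ / f n, ha, le_rfl, ?_⟩
    generalize τ / f n * f n = y at *
    generalize α n * f (n - 1) = x at *
    refine ⟨?_, ?_, ?_⟩ <;> omega
end
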